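/- arXiv:1105.2420 — 3 statements merged into one kernel-verified Lean document; each statement's English description precedes it below -/
import Mathlib

section
/- For every f ∈ ℬ(ℝ^d × ℝ^d) there exists a natural number k such that O^k f is Lebesgue integrable on ℝ^d × ℝ^d. -/
open MeasureTheory Complex

variable {d : ℕ}

/-- Second derivative of `f` in direction `v`. -/
noncomputable def dir2 (v : (Fin d → ℝ) × (Fin d → ℝ)) (f : (Fin d → ℝ) × (Fin d → ℝ) → ℂ)
    (z : (Fin d → ℝ) × (Fin d → ℝ)) : ℂ :=
  fderiv ℝ (fun y => fderiv ℝ f y v) z v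

/-- The Laplacian in all `2d` variables. -/
noncomputable def lap (f : (Fin d → ℝ) × (Fin d → ℝ) → ℂ)
    (z : (Fin d → ℝ) × (Fin d → ℝ)) : ℂ :=
  ∑ i : Fin d, dir2 (Pi.single i 1, 0) f z + ∑ i : Fin d, dir2 (0, Pi.single i 1) f z

/-- The weight `1 + |x|² + |w|²`. -/
noncomputable def wt (z : (Fin d → ℝ) × (Fin d → ℝ)) : ℝ :=
  1 + ∑ i, z.1 i ^ 2 + ∑ i, z.2 i ^ 2

/-- The operator `(O f)(x,w) = (1 − Δ)(f(x,w)/(1 + |x|² + |w|²))`. -/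
noncomputable def Oop (f : (Fin d → ℝ) × (Fin d → ℝ) → ℂ) :
    (Fin d → ℝ) × (Fin d → ℝ) → ℂ :=
  fun z => f z / (wt z : ℂ) - lap (fun y => f y / (wt y : ℂ)) z

/-- Membership in `ℬ`: smooth with all derivatives (including order zero) bounded. -/
def IsBSpace (g : (Fin d → ℝ) × (Fin d → ℝ) → ℂ) : Prop :=
  ContDiff ℝ (⊤ : ℕ∞) g ∧ ∀ N : ℕ, ∃ C : ℝ, ∀ z, ‖iteratedFDeriv ℝ N g z‖ ≤ C

/-- Symbol-type estimates up to order `n` with weight `m`. -/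
def SymN {E F : Type} [NormedAddCommGroup E] [NormedSpace ℝ E] [NormedAddCommGroup F]
    [NormedSpace ℝ F] (n : ℕ) (m : E → ℝ) (f : E → F) : Prop :=
  ContDiff ℝ (⊤ : ℕ∞) f ∧ ∀ N ≤ n, ∃ C : ℝ, 0 ≤ C ∧ ∀ z, ‖iteratedFDeriv ℝ N f z‖ ≤ C * m z

section
variable {E F G : Type} [NormedAddCommGroup E] [NormedSpace ℝ E] [NormedAddCommGroup F]
    [NormedSpace ℝ F] [NormedAddCommGroup G] [NormedSpace ℝ G]

lemma SymN.add {n : ℕ} {m : E → ℝ} {f g : E → F} (hf : SymN n m f) (hg : SymN n m g) :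
    SymN n m (fun z => f z + g z) := by
  refine ⟨hf.1.add hg.1, fun N hN => ?_⟩
  obtain ⟨C, hC, h1⟩ := hf.2 N hN
  obtain ⟨D, hD, h2⟩ := hg.2 N hN
  refine ⟨C + D, by positivity, fun z => ?_⟩
  have h : iteratedFDeriv ℝ N (fun z => f z + g z) z
      = iteratedFDeriv ℝ N f z + iteratedFDeriv ℝ N g z :=
    iteratedFDeriv_add_apply ((hf.1.of_le (by exact_mod_cast le_top)).contDiffAt)
      ((hg.1.of_le (by exact_mod_cast le_top)).contDiffAt)
  rw [h, add_mul]
  exact (norm_add_le _ _).trans (add_le_add (h1 z) (h2 z))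

lemma SymN.neg {n : ℕ} {m : E → ℝ} {f : E → F} (hf : SymN n m f) :
    SymN n m (fun z => - f z) := by
  refine ⟨hf.1.neg, fun N hN => ?_⟩
  obtain ⟨C, hC, h1⟩ := hf.2 N hN
  refine ⟨C, hC, fun z => ?_⟩
  have h : iteratedFDeriv ℝ N (fun z => - f z) z = - iteratedFDeriv ℝ N f z :=
    iteratedFDeriv_neg_apply
  rw [h, norm_neg]
  exact h1 z

lemma SymN.zero {n : ℕ} {m : E → ℝ} : SymN n m (fun _ => (0 : F)) := by
  refine ⟨contDiff_const, fun N _ => ⟨0, le_rfl, fun z => ?_⟩⟩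
  have : iteratedFDeriv ℝ N (fun _ : E => (0 : F)) z = 0 := by
    rw [iteratedFDeriv_fun_zero]; rfl
  rw [this]; simp

lemma SymN.sum {ι : Type} (s : Finset ι) {n : ℕ} {m : E → ℝ} {f : ι → E → F}
    (hf : ∀ i, SymN n m (f i)) : SymN n m (fun z => ∑ i ∈ s, f i z) := by
  classical
  induction s using Finset.induction_on with
  | empty => simpa using SymN.zero
  | insert a s ha ih =>
    simp only [Finset.sum_insert ha]
    exact (hf a).add ih

lemma SymN.smul {n : ℕ} {m₁ m₂ : E → ℝ} {f : E → ℝ} {g : E → F}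
    (h1 : ∀ z, 0 ≤ m₁ z)
    (hf : SymN n m₁ f) (hg : SymN n m₂ g) : SymN n (fun z => m₁ z * m₂ z) (fun z => f z • g z) := by
  refine ⟨hf.1.smul hg.1, fun N hN => ?_⟩
  have hf2 : ∀ i, ∃ C : ℝ, 0 ≤ C ∧ (i ≤ n → ∀ z, ‖iteratedFDeriv ℝ i f z‖ ≤ C * m₁ z) := by
    intro i
    by_cases hi : i ≤ n
    · obtain ⟨C, hC, h⟩ := hf.2 i hi
      exact ⟨C, hC, fun _ => h⟩
    · exact ⟨0, le_rfl, fun h => absurd h hi⟩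
  have hg2 : ∀ i, ∃ C : ℝ, 0 ≤ C ∧ (i ≤ n → ∀ z, ‖iteratedFDeriv ℝ i g z‖ ≤ C * m₂ z) := by
    intro i
    by_cases hi : i ≤ n
    · obtain ⟨C, hC, h⟩ := hg.2 i hi
      exact ⟨C, hC, fun _ => h⟩
    · exact ⟨0, le_rfl, fun h => absurd h hi⟩
  choose C hC hCf using hf2
  choose D hD hDg using hg2
  refine ⟨∑ i ∈ Finset.range (N + 1), (N.choose i : ℝ) * C i * D (N - i),
    Finset.sum_nonneg fun i _ => by have := hC i; have := hD (N - i); positivity, fun z => ?_⟩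
  refine (norm_iteratedFDeriv_smul_le hf.1 hg.1 z (n := N) (by exact_mod_cast le_top)).trans ?_
  rw [Finset.sum_mul]
  refine Finset.sum_le_sum fun i hi => ?_
  have hi' : i ≤ N := Nat.lt_succ_iff.mp (Finset.mem_range.mp hi)
  have a := hCf i (hi'.trans hN) z
  have b := hDg (N - i) ((Nat.sub_le _ _).trans hN) z
  have hm := h1 z
  have hc := hC i
  calc (N.choose i : ℝ) * ‖iteratedFDeriv ℝ i f z‖ * ‖iteratedFDeriv ℝ (N - i) g z‖
      ≤ (N.choose i : ℝ) * (C i * m₁ z) * (D (N - i) * m₂ z) := by gcongr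
    _ = _ := by ring

lemma SymN.mono {n : ℕ} {m m' : E → ℝ} {f : E → F} (h : ∀ z, m z ≤ m' z) (hf : SymN n m f) :
    SymN n m' f := by
  refine ⟨hf.1, fun N hN => ?_⟩
  obtain ⟨C, hC, h1⟩ := hf.2 N hN
  exact ⟨C, hC, fun z => (h1 z).trans (by have := h z; gcongr)⟩

lemma SymN.le {n n' : ℕ} {m : E → ℝ} {f : E → F} (h : n ≤ n') (hf : SymN n' m f) :
    SymN n m f := ⟨hf.1, fun N hN => hf.2 N (hN.trans h)⟩

lemma SymN.clm {n : ℕ} {m : E → ℝ} {f : E → F} (L : F →L[ℝ] G) (hf : SymN n m f) :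
    SymN n m (fun z => L (f z)) := by
  refine ⟨L.contDiff.comp hf.1, fun N hN => ?_⟩
  obtain ⟨C, hC, h1⟩ := hf.2 N hN
  refine ⟨‖L‖ * C, by positivity, fun z => ?_⟩
  have := L.norm_iteratedFDeriv_comp_left (f := f) (x := z) (N := (⊤ : ℕ∞)) (n := N)
    hf.1.contDiffAt (by exact_mod_cast le_top)
  refine this.trans ?_
  rw [mul_assoc]
  gcongr
  exact h1 z

lemma SymN.fderiv {n : ℕ} {m : E → ℝ} {f : E → F} (hf : SymN (n + 1) m f) :
    SymN n m (fun z => fderiv ℝ f z) := by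
  refine ⟨hf.1.fderiv_right (by simp), fun N hN => ?_⟩
  obtain ⟨C, hC, h1⟩ := hf.2 (N + 1) (by omega)
  refine ⟨C, hC, fun z => ?_⟩
  rw [show (fun z => _root_.fderiv ℝ f z) = _root_.fderiv ℝ f from rfl, norm_iteratedFDeriv_fderiv]
  exact h1 z

lemma SymN.of_fderiv {n : ℕ} {m : E → ℝ} {f : E → F} (hf : ContDiff ℝ (⊤ : ℕ∞) f)
    (h0 : ∃ C : ℝ, 0 ≤ C ∧ ∀ z, ‖f z‖ ≤ C * m z)
    (h : SymN n m (fun z => _root_.fderiv ℝ f z)) : SymN (n + 1) m f := by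
  refine ⟨hf, fun N hN => ?_⟩
  cases N with
  | zero => simpa using h0
  | succ N =>
    obtain ⟨C, hC, h1⟩ := h.2 N (by omega)
    refine ⟨C, hC, fun z => ?_⟩
    rw [← norm_iteratedFDeriv_fderiv]
    exact h1 z

lemma SymN.const {n : ℕ} {m : E → ℝ} (hm : ∀ z, 1 ≤ m z) (c : F) : SymN n m (fun _ => c) := by
  refine ⟨contDiff_const, fun N _ => ?_⟩
  cases N with
  | zero =>
    refine ⟨‖c‖, norm_nonneg _, fun z => ?_⟩
    simpa using le_mul_of_one_le_right (norm_nonneg c) (hm z)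
  | succ N =>
    refine ⟨0, le_rfl, fun z => ?_⟩
    rw [iteratedFDeriv_const_of_ne (Nat.succ_ne_zero N)]; simp

lemma SymN.linear {n : ℕ} {m : E → ℝ} (hm : ∀ z, 1 ≤ m z) (L : E →L[ℝ] F)
    (h : ∀ z, ‖L z‖ ≤ m z) : SymN n m (fun z => L z) := by
  refine SymN.le (Nat.le_succ n) (SymN.of_fderiv L.contDiff ⟨1, zero_le_one, by simpa using h⟩ ?_)
  simpa using SymN.const (n := n) hm L

lemma SymN.inv {m : E → ℝ} (hm : ∀ z, 1 ≤ m z) (h : ∀ n, SymN n m m) (n : ℕ) :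
    SymN n (fun z => (m z)⁻¹) (fun z => (m z)⁻¹) := by
  have hne : ∀ z, m z ≠ 0 := fun z => by have := hm z; positivity
  have hpos : ∀ z, 0 < m z := fun z => by have := hm z; positivity
  have hsm : ContDiff ℝ (⊤ : ℕ∞) (fun z => (m z)⁻¹) := (h 0).1.inv hne
  have h0 : ∃ C : ℝ, 0 ≤ C ∧ ∀ z, ‖(m z)⁻¹‖ ≤ C * (m z)⁻¹ := by
    refine ⟨1, zero_le_one, fun z => ?_⟩
    rw [Real.norm_of_nonneg (inv_nonneg.2 (hpos z).le), one_mul]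
  induction n with
  | zero =>
    refine ⟨hsm, fun N hN => ?_⟩
    obtain rfl : N = 0 := by omega
    simpa using h0
  | succ n ih =>
    refine SymN.of_fderiv hsm h0 ?_
    have hi : ∀ z, 0 ≤ (m z)⁻¹ := fun z => inv_nonneg.2 (hpos z).le
    have e : (fun z => _root_.fderiv ℝ (fun z => (m z)⁻¹) z)
        = fun z => - ((m z)⁻¹ • ((m z)⁻¹ • _root_.fderiv ℝ m z)) := by
      funext z
      have hd : HasFDerivAt m (_root_.fderiv ℝ m z) z :=
        (((h 0).1.differentiable (by simp)) z).hasFDerivAt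
      have := ((hasDerivAt_inv (hne z)).comp_hasFDerivAt z hd).fderiv
      have h2 : (fun z => (m z)⁻¹) = Inv.inv ∘ m := rfl
      rw [h2, this, smul_smul, ← neg_smul]
      congr 1
      field_simp
    rw [e]
    have := (SymN.smul hi ih (SymN.smul hi ih (h (n + 1)).fderiv)).neg
    refine this.mono fun z => ?_
    rw [inv_mul_cancel₀ (hne z), mul_one]
end

lemma one_le_wt (z : (Fin d → ℝ) × (Fin d → ℝ)) : 1 ≤ wt z := by
  unfold wt
  have h1 : 0 ≤ ∑ i, z.1 i ^ 2 := Finset.sum_nonneg fun i _ => sq_nonneg _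
  have h2 : 0 ≤ ∑ i, z.2 i ^ 2 := Finset.sum_nonneg fun i _ => sq_nonneg _
  linarith

lemma sq_fst_le (z : (Fin d → ℝ) × (Fin d → ℝ)) (i : Fin d) : 1 + z.1 i ^ 2 ≤ wt z := by
  unfold wt
  have h1 := Finset.single_le_sum (f := fun i => z.1 i ^ 2) (fun i _ => sq_nonneg _)
    (Finset.mem_univ i)
  have h2 : 0 ≤ ∑ i, z.2 i ^ 2 := Finset.sum_nonneg fun i _ => sq_nonneg _
  linarith

lemma sq_snd_le (z : (Fin d → ℝ) × (Fin d → ℝ)) (i : Fin d) : 1 + z.2 i ^ 2 ≤ wt z := by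
  unfold wt
  have h1 := Finset.single_le_sum (f := fun i => z.2 i ^ 2) (fun i _ => sq_nonneg _)
    (Finset.mem_univ i)
  have h2 : 0 ≤ ∑ i, z.1 i ^ 2 := Finset.sum_nonneg fun i _ => sq_nonneg _
  linarith

lemma norm_sq_le_wt (z : (Fin d → ℝ) × (Fin d → ℝ)) : ‖z‖ ≤ √(wt z) := by
  have h0 : 0 ≤ √(wt z) := Real.sqrt_nonneg _
  rw [Prod.norm_def]
  refine max_le ?_ ?_
  · refine (pi_norm_le_iff_of_nonneg h0).2 fun i => ?_
    exact Real.abs_le_sqrt (by have := sq_fst_le z i; linarith)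
  · refine (pi_norm_le_iff_of_nonneg h0).2 fun i => ?_
    exact Real.abs_le_sqrt (by have := sq_snd_le z i; linarith)

lemma symN_wt (n : ℕ) : SymN n (wt (d := d)) (wt (d := d)) := by
  have hs : ∀ z : (Fin d → ℝ) × (Fin d → ℝ), 1 ≤ √(wt z) := fun z =>
    Real.one_le_sqrt.2 (one_le_wt z)
  have key : ∀ L : (Fin d → ℝ) × (Fin d → ℝ) →L[ℝ] ℝ, (∀ z, L z ^ 2 ≤ wt z) →
      SymN n (wt (d := d)) (fun z => L z ^ 2) := by
    intro L hL
    have h1 : SymN n (fun z => √(wt z)) (fun z => L z) :=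
      SymN.linear hs L fun z => Real.abs_le_sqrt (hL z)
    have h2 := SymN.smul (fun z => Real.sqrt_nonneg _) h1 h1
    have e : (fun z : (Fin d → ℝ) × (Fin d → ℝ) => √(wt z) * √(wt z)) = wt := by
      funext z
      exact Real.mul_self_sqrt (by have := one_le_wt z; linarith)
    rw [e] at h2
    simpa [sq] using h2
  refine SymN.add (SymN.add (SymN.const one_le_wt (1 : ℝ)) (SymN.sum _ fun i => ?_))
    (SymN.sum _ fun i => ?_)
  · exact key ((ContinuousLinearMap.proj i).comp (ContinuousLinearMap.fst ℝ _ _))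
      fun z => by have := sq_fst_le z i; simp; linarith
  · exact key ((ContinuousLinearMap.proj i).comp (ContinuousLinearMap.snd ℝ _ _))
      fun z => by have := sq_snd_le z i; simp; linarith

lemma symN_dir2 {m : (Fin d → ℝ) × (Fin d → ℝ) → ℝ} {f : (Fin d → ℝ) × (Fin d → ℝ) → ℂ}
    (hf : ∀ n, SymN n m f) (v : (Fin d → ℝ) × (Fin d → ℝ)) (n : ℕ) : SymN n m (dir2 v f) := by
  have h1 : ∀ n, SymN n m (fun y => fderiv ℝ f y v) := fun n =>
    (hf (n + 1)).fderiv.clm (ContinuousLinearMap.apply ℝ ℂ v)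
  exact (h1 (n + 1)).fderiv.clm (ContinuousLinearMap.apply ℝ ℂ v)

lemma symN_Oop {m : (Fin d → ℝ) × (Fin d → ℝ) → ℝ} {f : (Fin d → ℝ) × (Fin d → ℝ) → ℂ}
    (hf : ∀ n, SymN n m f) (n : ℕ) : SymN n (fun z => (wt z)⁻¹ * m z) (Oop f) := by
  have h1 : ∀ n, SymN n (fun z => (wt z)⁻¹ * m z) (fun z => f z / (wt z : ℂ)) := by
    intro n
    have := SymN.smul (fun z => inv_nonneg.2 (zero_le_one.trans (one_le_wt z)))
      (SymN.inv one_le_wt symN_wt n) (hf n)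
    convert this using 2 with z
    rw [Complex.real_smul, div_eq_inv_mul, Complex.ofReal_inv]
  have h2 : SymN n (fun z => (wt z)⁻¹ * m z) (lap (fun y => f y / (wt y : ℂ))) :=
    SymN.add (SymN.sum _ fun i => symN_dir2 h1 _ n) (SymN.sum _ fun i => symN_dir2 h1 _ n)
  have := (h1 n).add h2.neg
  simp only [← sub_eq_add_neg] at this
  exact this

lemma symN_iterate {f : (Fin d → ℝ) × (Fin d → ℝ) → ℂ}
    (hf : IsBSpace f) (k n : ℕ) : SymN n (fun z => (wt z)⁻¹ ^ k) (Oop^[k] f) := by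
  induction k generalizing n with
  | zero =>
    refine ⟨hf.1, fun N _ => ?_⟩
    obtain ⟨C, hC⟩ := hf.2 N
    exact ⟨C, (norm_nonneg _).trans (hC 0), by simpa using hC⟩
  | succ k ih =>
    rw [Function.iterate_succ_apply']
    simpa only [pow_succ'] using symN_Oop ih n

theorem exists_iterate_integrable (d : ℕ) (f : (Fin d → ℝ) × (Fin d → ℝ) → ℂ)
    (hf : IsBSpace f) :
    ∃ k : ℕ, Integrable (Oop^[k] f)
      (volume : Measure ((Fin d → ℝ) × (Fin d → ℝ))) := by
  set r : ℕ := Module.finrank ℝ ((Fin d → ℝ) × (Fin d → ℝ)) + 1 with hr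
  refine ⟨r, ?_⟩
  have hs := symN_iterate hf r 0
  obtain ⟨C, hC, h⟩ := hs.2 0 le_rfl
  have : (volume : Measure ((Fin d → ℝ) × (Fin d → ℝ))).IsAddHaarMeasure := by
    exact Measure.prod.instIsAddHaarMeasure (volume : Measure (Fin d → ℝ)) (volume : Measure (Fin d → ℝ))
  have hint : Integrable (fun z : (Fin d → ℝ) × (Fin d → ℝ) => (1 + ‖z‖) ^ (-(r : ℝ)))
      volume := integrable_one_add_norm (by rw [hr]; push_cast; linarith)
  refine (hint.const_mul (C * 2 ^ r)).mono' hs.1.continuous.aestronglyMeasurable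
    (Filter.Eventually.of_forall fun z => ?_)
  have h1 := h z
  rw [norm_iteratedFDeriv_zero] at h1
  refine h1.trans ?_
  have hw := one_le_wt z
  have hsq : √(wt z) ≤ wt z := by
    rw [Real.sqrt_le_left (by linarith)]
    nlinarith
  have h2 : 1 + ‖z‖ ≤ 2 * wt z := by have := norm_sq_le_wt z; linarith
  have h3 : 0 < 1 + ‖z‖ := by positivity
  have h4 : (wt z)⁻¹ ≤ 2 * (1 + ‖z‖)⁻¹ := by
    rw [← div_eq_mul_inv, inv_eq_one_div, div_le_div_iff₀ (by linarith) h3]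
    linarith
  rw [Real.rpow_neg h3.le, Real.rpow_natCast, mul_assoc, ← inv_pow, ← mul_pow]
  have h5 : 0 ≤ (wt z)⁻¹ := inv_nonneg.2 (by linarith)
  beta_reduce
  gcongr
end

section
/- Fix θ > 0. For all Schwartz functions f, g : ℝ^d × ℝ^d → ℂ, the function f ⋆_θ g is again a Schwartz function, and the star product is associative on Schwartz functions: (f ⋆_θ g) ⋆_θ h = f ⋆_θ (g ⋆_θ h) for all Schwartz f, g, h. -/
open MeasureTheory Complex Real

/-- The star product `(f ⋆_θ g)(x,w)` on `ℝ^d × ℝ^d`. -/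
noncomputable def sprod (d : ℕ) (θ : ℝ) (f g : (Fin d → ℝ) × (Fin d → ℝ) → ℂ) :
    (Fin d → ℝ) × (Fin d → ℝ) → ℂ := fun z =>
  (((Real.pi * θ) ^ (-(2 * d : ℤ)) : ℝ) : ℂ) *
    ∫ p : ((Fin d → ℝ) × (Fin d → ℝ)) × ((Fin d → ℝ) × (Fin d → ℝ)),
      f p.1 * g p.2 * Complex.exp (2 * Complex.I / (θ : ℂ) *
        ((∑ i, (p.2.1 i - z.1 i) * p.1.2 i + ∑ i, (z.1 i - p.1.1 i) * p.2.2 i +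
          ∑ i, (p.1.1 i - p.2.1 i) * z.2 i : ℝ) : ℂ))

open scoped SchwartzMap FourierTransform ContDiff

theorem expI_tg : (fun t : ℝ => Complex.exp (Complex.I * (t : ℂ))).HasTemperateGrowth := by
  refine ⟨(contDiff_const.mul Complex.ofRealCLM.contDiff).cexp, fun n => ⟨0, 1, fun x => ?_⟩⟩
  have h : ∀ n : ℕ, iteratedDeriv n (fun t : ℝ => Complex.exp (Complex.I * (t : ℂ))) =
      fun t : ℝ => Complex.I ^ n * Complex.exp (Complex.I * (t : ℂ)) := by
    intro n
    induction n with
    | zero => simp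
    | succ k ih =>
      rw [iteratedDeriv_succ, ih]
      funext t
      have h1 : HasDerivAt (fun t : ℝ => Complex.I * (t : ℂ)) Complex.I t := by
        simpa using (Complex.ofRealCLM.hasDerivAt (x := t)).const_mul Complex.I
      rw [(h1.cexp.const_mul (Complex.I ^ k)).deriv]
      ring
  rw [norm_iteratedFDeriv_eq_norm_iteratedDeriv, h]
  simp [mul_comm Complex.I, Complex.norm_exp_ofReal_mul_I]

theorem norm_iter_comp_le {E F : Type*} [NormedAddCommGroup E] [NormedSpace ℝ E]
    [NormedAddCommGroup F] [NormedSpace ℝ F] (f : 𝓢(F, ℂ)) (L : E →L[ℝ] F) (hL : ‖L‖ ≤ 1)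
    (n : ℕ) (x : E) :
    ‖iteratedFDeriv ℝ n (fun p => f (L p)) x‖ ≤ ‖iteratedFDeriv ℝ n f (L x)‖ := by
  have := L.iteratedFDeriv_comp_right (f := f) (f.smooth ⊤) x (i := n) (mod_cast le_top)
  change ‖iteratedFDeriv ℝ n (f ∘ L) x‖ ≤ _
  rw [this]
  refine (ContinuousMultilinearMap.norm_compContinuousLinearMap_le _ _).trans ?_
  refine mul_le_of_le_one_right (norm_nonneg _) ?_
  exact Finset.prod_le_one (fun _ _ => norm_nonneg _) (fun _ _ => hL)

theorem tensor_schwartz {E F : Type*} [NormedAddCommGroup E] [NormedSpace ℝ E]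
    [NormedAddCommGroup F] [NormedSpace ℝ F] (f : 𝓢(E, ℂ)) (g : 𝓢(F, ℂ)) :
    ∃ H : 𝓢(E × F, ℂ), ∀ p, H p = f p.1 * g p.2 := by
  have hf : ContDiff ℝ ∞ (fun p : E × F => f p.1) := (f.smooth ⊤).comp contDiff_fst
  have hg : ContDiff ℝ ∞ (fun p : E × F => g p.2) := (g.smooth ⊤).comp contDiff_snd
  refine ⟨⟨fun p => f p.1 * g p.2, hf.mul hg, fun k n => ?_⟩, fun p => rfl⟩
  choose Cf hCf using fun k i => f.decay k i
  choose Cg hCg using fun k i => g.decay k i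
  refine ⟨∑ i ∈ Finset.range (n + 1), (n.choose i : ℝ) *
    (Cf k i * Cg 0 (n - i) + Cf 0 i * Cg k (n - i)), fun p => ?_⟩
  have h1 := norm_iteratedFDeriv_mul_le hf hg p (n := n) (mod_cast le_top)
  refine (mul_le_mul_of_nonneg_left h1 (by positivity)).trans ?_
  rw [Finset.mul_sum]
  refine Finset.sum_le_sum fun i _ => ?_
  have a1 := norm_iter_comp_le f (ContinuousLinearMap.fst ℝ E F)
    (ContinuousLinearMap.norm_fst_le ..) i p
  have a2 := norm_iter_comp_le g (ContinuousLinearMap.snd ℝ E F)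
    (ContinuousLinearMap.norm_snd_le ..) (n - i) p
  simp only [ContinuousLinearMap.coe_fst', ContinuousLinearMap.coe_snd'] at a1 a2
  have b1 := (hCf k i).2 p.1
  have b2 := (hCf 0 i).2 p.1
  have b3 := (hCg k (n - i)).2 p.2
  have b4 := (hCg 0 (n - i)).2 p.2
  simp only [pow_zero, one_mul] at b2 b4
  set u := ‖iteratedFDeriv ℝ i f p.1‖
  set v := ‖iteratedFDeriv ℝ (n - i) g p.2‖
  have hu : 0 ≤ u := norm_nonneg _
  have hv : 0 ≤ v := norm_nonneg _
  have hk : ‖p‖ ^ k ≤ ‖p.1‖ ^ k + ‖p.2‖ ^ k := by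
    rw [Prod.norm_def]
    rcases max_cases ‖p.1‖ ‖p.2‖ with h | h <;> rw [h.1] <;> simp
  calc _ ≤ (‖p.1‖ ^ k + ‖p.2‖ ^ k) * ((n.choose i : ℝ) * u * v) := by gcongr
    _ = (n.choose i : ℝ) * ((‖p.1‖ ^ k * u) * v + u * (‖p.2‖ ^ k * v)) := by ring
    _ ≤ _ := by
      gcongr
      · exact (hCf k i).1.le
      · exact (hCf 0 i).1.le

theorem osc_schwartz {E E' : Type*} [NormedAddCommGroup E] [NormedSpace ℝ E]
    [FiniteDimensional ℝ E] [MeasurableSpace E] [BorelSpace E] (μ : Measure E)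
    [μ.IsAddHaarMeasure]
    [NormedAddCommGroup E'] [NormedSpace ℝ E'] [FiniteDimensional ℝ E']
    (φ : 𝓢(E, ℂ)) (B : E →ₗ[ℝ] E' →ₗ[ℝ] ℝ) (hB : ∀ z, (∀ p, B p z = 0) → z = 0) :
    ∃ F : 𝓢(E', ℂ), ∀ z, F z = ∫ p, φ p * Complex.exp (Complex.I * (B p z : ℂ)) ∂μ := by
  let V := EuclideanSpace ℝ (Fin (Module.finrank ℝ E))
  let A : E ≃L[ℝ] V := toEuclidean
  let L : E' →ₗ[ℝ] V :=
    { toFun := fun z => (-(2 * π)⁻¹) • (InnerProductSpace.toDual ℝ V).symm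
        (LinearMap.toContinuousLinearMap ((B.flip z) ∘ₗ (A.symm : V →ₗ[ℝ] E)))
      map_add' := by
        intro x y
        rw [← smul_add, ← map_add, ← map_add, map_add, LinearMap.add_comp]
      map_smul' := by
        intro c x
        rw [map_smul, LinearMap.smul_comp, map_smul, map_smulₛₗ, smul_comm]
        simp }
  have hL : ∀ (p : E) z, inner ℝ (A p) (L z) = -(2 * π)⁻¹ * B p z := by
    intro p z
    simp only [L, LinearMap.coe_mk, AddHom.coe_mk]
    rw [real_inner_comm, real_inner_smul_left, InnerProductSpace.toDual_symm_apply]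
    simp
  have hLinj : LinearMap.ker L = ⊥ := by
    rw [LinearMap.ker_eq_bot']
    intro z hz
    refine hB z fun p => ?_
    have := hL p z
    rw [hz, inner_zero_right] at this
    have hpi : (2 * π)⁻¹ ≠ 0 := by positivity
    rcases mul_eq_zero.1 this.symm with h | h
    · exact absurd (neg_eq_zero.1 h) hpi
    · exact h
  obtain ⟨K, -, hK⟩ := L.exists_antilipschitzWith hLinj
  have : (μ.map A).IsAddHaarMeasure := A.isAddHaarMeasure_map μ
  let c := Measure.addHaarScalarFactor (μ.map A) (volume : Measure V)
  have hc : μ.map A = c • (volume : Measure V) := Measure.isAddLeftInvariant_eq_smul _ _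
  let ψ : 𝓢(V, ℂ) := SchwartzMap.compCLMOfContinuousLinearEquiv ℂ A.symm φ
  let G : 𝓢(V, ℂ) := 𝓕 ψ
  have hLt : (fun z => L z).HasTemperateGrowth :=
    (LinearMap.toContinuousLinearMap L).hasTemperateGrowth
  refine ⟨((c : ℝ) : ℂ) • SchwartzMap.compCLMOfAntilipschitz ℂ hLt hK G, fun z => ?_⟩
  have e1 : ∫ p, φ p * Complex.exp (Complex.I * (B p z : ℂ)) ∂μ =
      ∫ y, φ (A.symm y) * Complex.exp (Complex.I * (B (A.symm y) z : ℂ)) ∂(μ.map A) := by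
    have := (A.toHomeomorph.toMeasurableEquiv.measurableEmbedding).integral_map (μ := μ)
      (fun y => φ (A.symm y) * Complex.exp (Complex.I * (B (A.symm y) z : ℂ)))
    simp at this
    exact this.symm
  rw [e1, hc, integral_smul_nnreal_measure]
  have e2 : G (L z) = ∫ y, φ (A.symm y) * Complex.exp (Complex.I * (B (A.symm y) z : ℂ)) := by
    change 𝓕 (ψ : V → ℂ) (L z) = _
    rw [Real.fourier_eq']
    congr 1
    funext y
    have h := hL (A.symm y) z
    rw [A.apply_symm_apply] at h
    rw [h, smul_eq_mul, mul_comm]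
    congr 1
    congr 1
    have hpi : (π : ℂ) ≠ 0 := by exact_mod_cast Real.pi_ne_zero
    push_cast
    field_simp
  rw [← e2]
  rfl

/-- The phase factor. -/
noncomputable def ph (θ t : ℝ) : ℂ := Complex.exp (Complex.I * ((2 / θ * t : ℝ) : ℂ))

theorem ph_add (θ a b : ℝ) : ph θ (a + b) = ph θ a * ph θ b := by
  simp only [ph]
  rw [← Complex.exp_add]
  congr 1
  push_cast
  ring

theorem ph_norm (θ a : ℝ) : ‖ph θ a‖ = 1 := by
  simp only [ph]
  rw [mul_comm, Complex.norm_exp_ofReal_mul_I]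

theorem ph_cont (θ : ℝ) : Continuous (ph θ) := by
  unfold ph
  fun_prop

/-- Phase space. -/
abbrev PS (d : ℕ) := (Fin d → ℝ) × (Fin d → ℝ)

instance ps_haar (d : ℕ) : (volume : Measure (PS d)).IsAddHaarMeasure :=
  Measure.prod.instIsAddHaarMeasure (volume : Measure (Fin d → ℝ)) (volume : Measure (Fin d → ℝ))

instance ps2_haar (d : ℕ) : (volume : Measure (PS d × PS d)).IsAddHaarMeasure :=
  Measure.prod.instIsAddHaarMeasure (volume : Measure (PS d)) (volume : Measure (PS d))

instance ps_neg (d : ℕ) : (volume : Measure (PS d)).IsNegInvariant := by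
  have h1 : IsLocallyFiniteMeasure (volume : Measure (PS d)) :=
    isLocallyFiniteMeasure_of_isFiniteMeasureOnCompacts
  have h2 : (volume : Measure (PS d)).Regular :=
    Measure.Regular.of_sigmaCompactSpace_of_isLocallyFiniteMeasure _
  exact Measure.IsAddHaarMeasure.isNegInvariant_of_regular _

/-- The symplectic form. -/
def sg (d : ℕ) : PS d →ₗ[ℝ] PS d →ₗ[ℝ] ℝ :=
  LinearMap.mk₂ ℝ (fun p q => ∑ i, (q.1 i * p.2 i - p.1 i * q.2 i))
    (by intro a b c; rw [← Finset.sum_add_distrib]; congr 1; funext i; simp; ring)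
    (by intro a b c; simp only [smul_eq_mul, Finset.mul_sum]; congr 1; funext i; simp; ring)
    (by intro a b c; rw [← Finset.sum_add_distrib]; congr 1; funext i; simp; ring)
    (by intro a b c; simp only [smul_eq_mul, Finset.mul_sum]; congr 1; funext i; simp; ring)

theorem sg_apply (d : ℕ) (p q : PS d) :
    sg d p q = ∑ i, (q.1 i * p.2 i - p.1 i * q.2 i) := rfl

theorem sg_anti (d : ℕ) (p q : PS d) : sg d p q = - sg d q p := by
  rw [sg_apply, sg_apply, ← Finset.sum_neg_distrib]
  congr 1; funext i; ring

theorem sg_self (d : ℕ) (p : PS d) : sg d p p = 0 := by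
  have := sg_anti d p p
  linarith

theorem sg_cont (d : ℕ) : Continuous (fun x : PS d × PS d => sg d x.1 x.2) := by
  simp only [sg_apply]
  fun_prop

theorem sg_cont' {X : Type*} [TopologicalSpace X] (d : ℕ) {a b : X → PS d} (ha : Continuous a)
    (hb : Continuous b) : Continuous (fun x => sg d (a x) (b x)) :=
  (sg_cont d).comp (ha.prodMk hb)

theorem sg_nondeg (d : ℕ) (z : PS d) (h : ∀ p, sg d p z = 0) : z = 0 := by
  have h1 := h (-z.2, z.1)
  rw [sg_apply] at h1
  have h2 : ∀ i ∈ Finset.univ, (0 : ℝ) ≤ z.1 i * z.1 i + z.2 i * z.2 i := fun i _ =>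
    add_nonneg (mul_self_nonneg _) (mul_self_nonneg _)
  have h3 : ∑ i, (z.1 i * z.1 i + z.2 i * z.2 i) = 0 := by
    rw [← h1]; congr 1; funext i; simp
  have h4 := (Finset.sum_eq_zero_iff_of_nonneg h2).1 h3
  have h5 : ∀ i, z.1 i = 0 ∧ z.2 i = 0 := fun i => by
    have := h4 i (Finset.mem_univ i)
    constructor <;> nlinarith [mul_self_nonneg (z.1 i), mul_self_nonneg (z.2 i)]
  exact Prod.ext (funext fun i => (h5 i).1) (funext fun i => (h5 i).2)

theorem sprod_eq (d : ℕ) (θ : ℝ) (f g : PS d → ℂ) (z : PS d) :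
    sprod d θ f g z = (((Real.pi * θ) ^ (-(2 * d : ℤ)) : ℝ) : ℂ) *
      ∫ p : PS d × PS d, f p.1 * g p.2 * ph θ (sg d p.1 p.2 + sg d p.2 z + sg d z p.1) := by
  unfold sprod
  congr 2
  funext p
  congr 1
  unfold ph
  congr 1
  have : (∑ i, (p.2.1 i - z.1 i) * p.1.2 i + ∑ i, (z.1 i - p.1.1 i) * p.2.2 i +
          ∑ i, (p.1.1 i - p.2.1 i) * z.2 i : ℝ) = sg d p.1 p.2 + sg d p.2 z + sg d z p.1 := by
    simp only [sg_apply]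
    rw [← Finset.sum_add_distrib, ← Finset.sum_add_distrib, ← Finset.sum_add_distrib,
      ← Finset.sum_add_distrib]
    congr 1; funext i; ring
  rw [this]
  push_cast
  ring

/-- The symplectic Fourier transform. -/
noncomputable def sft (d : ℕ) (θ : ℝ) (f : PS d → ℂ) (u : PS d) : ℂ :=
  ∫ p, f p * ph θ (sg d p u)

theorem sft_schwartz (d : ℕ) (θ : ℝ) (hθ : 0 < θ) (f : 𝓢(PS d, ℂ)) :
    ∃ F : 𝓢(PS d, ℂ), ⇑F = sft d θ f := by
  obtain ⟨F, hF⟩ := osc_schwartz (volume : Measure (PS d)) f ((2 / θ) • sg d) (by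
    intro z h
    refine sg_nondeg d z fun p => ?_
    have := h p
    simp only [LinearMap.smul_apply, smul_eq_mul] at this
    have h2 : 2 / θ ≠ 0 := by positivity
    exact (mul_eq_zero.1 this).resolve_left h2)
  refine ⟨F, funext fun z => ?_⟩
  rw [hF]
  rfl

theorem sprod_schwartz (d : ℕ) (θ : ℝ) (hθ : 0 < θ) (f g : 𝓢(PS d, ℂ)) :
    ∃ F : 𝓢(PS d, ℂ), ⇑F = sprod d θ f g := by
  obtain ⟨H, hH⟩ := tensor_schwartz f g
  have hQ : Function.HasTemperateGrowth (fun p : PS d × PS d => ph θ (sg d p.1 p.2)) := by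
    refine expI_tg.comp (f := fun p : PS d × PS d => 2 / θ * sg d p.1 p.2) ?_
    refine (Function.HasTemperateGrowth.const _).mul ?_
    simp only [sg_apply]
    refine Function.HasTemperateGrowth.sum fun i _ => ?_
    have l1 : (fun p : PS d × PS d => p.1.1 i).HasTemperateGrowth :=
      ((ContinuousLinearMap.proj (R := ℝ) (φ := fun _ : Fin d => ℝ) i).comp
        ((ContinuousLinearMap.fst ℝ _ _).comp
          (ContinuousLinearMap.fst ℝ (PS d) (PS d)))).hasTemperateGrowth
    have l2 : (fun p : PS d × PS d => p.1.2 i).HasTemperateGrowth :=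
      ((ContinuousLinearMap.proj (R := ℝ) (φ := fun _ : Fin d => ℝ) i).comp
        ((ContinuousLinearMap.snd ℝ _ _).comp
          (ContinuousLinearMap.fst ℝ (PS d) (PS d)))).hasTemperateGrowth
    have l3 : (fun p : PS d × PS d => p.2.1 i).HasTemperateGrowth :=
      ((ContinuousLinearMap.proj (R := ℝ) (φ := fun _ : Fin d => ℝ) i).comp
        ((ContinuousLinearMap.fst ℝ _ _).comp
          (ContinuousLinearMap.snd ℝ (PS d) (PS d)))).hasTemperateGrowth
    have l4 : (fun p : PS d × PS d => p.2.2 i).HasTemperateGrowth :=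
      ((ContinuousLinearMap.proj (R := ℝ) (φ := fun _ : Fin d => ℝ) i).comp
        ((ContinuousLinearMap.snd ℝ _ _).comp
          (ContinuousLinearMap.snd ℝ (PS d) (PS d)))).hasTemperateGrowth
    exact (l3.mul l2).sub (l1.mul l4)
  let φ : 𝓢(PS d × PS d, ℂ) := SchwartzMap.smulLeftCLM ℂ
    (fun p : PS d × PS d => ph θ (sg d p.1 p.2)) H
  have hφ : ∀ p, φ p = ph θ (sg d p.1 p.2) * (f p.1 * g p.2) := by
    intro p
    simp only [φ]
    rw [SchwartzMap.smulLeftCLM_apply_apply hQ, hH, smul_eq_mul]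
  let B : (PS d × PS d) →ₗ[ℝ] PS d →ₗ[ℝ] ℝ :=
    (2 / θ) • (sg d ∘ₗ (LinearMap.snd ℝ (PS d) (PS d) - LinearMap.fst ℝ (PS d) (PS d)))
  have hB : ∀ p z, B p z = 2 / θ * (sg d p.2 z + sg d z p.1) := by
    intro p z
    rw [sg_anti d z p.1]
    simp [B]
    left
    ring
  obtain ⟨F, hF⟩ := osc_schwartz (volume : Measure (PS d × PS d)) φ B (by
    intro z h
    refine sg_nondeg d z fun p => ?_
    have := h (0, p)
    rw [hB] at this
    have h2 : 2 / θ ≠ 0 := by positivity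
    simpa using (mul_eq_zero.1 this).resolve_left h2)
  refine ⟨(((Real.pi * θ) ^ (-(2 * d : ℤ)) : ℝ) : ℂ) • F, funext fun z => ?_⟩
  rw [sprod_eq]
  change _ * F z = _
  rw [hF]
  congr 2
  funext p
  rw [hφ, hB, add_assoc, ph_add]
  simp only [ph]
  ring

theorem int_aux (d : ℕ) (θ : ℝ) {f g : PS d → ℂ} (hf : Integrable f) (hg : Integrable g)
    {k : PS d × PS d → ℂ} (hk : Continuous k) {C : ℝ} (hC : ∀ p, ‖k p‖ ≤ C) :
    Integrable (fun p : PS d × PS d => f p.1 * g p.2 * k p) (volume.prod volume) :=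
  (hf.mul_prod hg).mul_bdd (c := C) hk.aestronglyMeasurable (Filter.Eventually.of_forall hC)

theorem form1 (d : ℕ) (θ : ℝ) {f g : PS d → ℂ} (hf : Integrable f) (hg : Integrable g)
    (z : PS d) :
    ∫ p : PS d × PS d, f p.1 * g p.2 * ph θ (sg d p.1 p.2 + sg d p.2 z + sg d z p.1) =
    ∫ u, sft d θ f u * g (z + u) * ph θ (sg d u z) := by
  have hi := int_aux d θ hf hg (k := fun p => ph θ (sg d p.1 p.2 + sg d p.2 z + sg d z p.1))
    ((ph_cont θ).comp (((sg_cont' d continuous_fst continuous_snd).add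
      (sg_cont' d continuous_snd continuous_const)).add
        (sg_cont' d continuous_const continuous_fst))) (C := 1) (fun p => (ph_norm θ _).le)
  rw [Measure.volume_eq_prod, integral_prod_symm _ hi]
  rw [← integral_add_left_eq_self _ z]
  congr 1
  funext u
  rw [sft, mul_assoc, ← integral_mul_const]
  congr 1
  funext p
  have : sg d p (z + u) + sg d (z + u) z + sg d z p = sg d p u + sg d u z := by
    rw [sg_anti d z p]
    simp only [map_add, LinearMap.add_apply, sg_self]
    ring
  simp only
  rw [this, ph_add]
  ring

theorem form2 (d : ℕ) (θ : ℝ) {f g : PS d → ℂ} (hf : Integrable f) (hg : Integrable g)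
    (z : PS d) :
    ∫ p : PS d × PS d, f p.1 * g p.2 * ph θ (sg d p.1 p.2 + sg d p.2 z + sg d z p.1) =
    ∫ u, sft d θ g u * f (z - u) * ph θ (sg d u z) := by
  have hi := int_aux d θ hf hg (k := fun p => ph θ (sg d p.1 p.2 + sg d p.2 z + sg d z p.1))
    ((ph_cont θ).comp (((sg_cont' d continuous_fst continuous_snd).add
      (sg_cont' d continuous_snd continuous_const)).add
        (sg_cont' d continuous_const continuous_fst))) (C := 1) (fun p => (ph_norm θ _).le)
  rw [Measure.volume_eq_prod, integral_prod _ hi]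
  rw [← integral_sub_left_eq_self _ _ z]
  congr 1
  funext u
  rw [sft, mul_assoc, ← integral_mul_const]
  congr 1
  funext q
  have : sg d (z - u) q + sg d q z + sg d z (z - u) = sg d q u + sg d u z := by
    rw [sg_anti d q z, sg_anti d q u]
    simp only [map_sub, LinearMap.sub_apply, sg_self]
    rw [sg_anti d z u]
    ring
  simp only
  rw [this, ph_add]
  ring

theorem sprod_assoc (d : ℕ) (θ : ℝ) (hθ : 0 < θ) (f g h : 𝓢(PS d, ℂ)) :
    sprod d θ (sprod d θ f g) h = sprod d θ f (sprod d θ g h) := by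
  obtain ⟨FG, hFG⟩ := sprod_schwartz d θ hθ f g
  obtain ⟨GH, hGH⟩ := sprod_schwartz d θ hθ g h
  obtain ⟨Sf, hSf⟩ := sft_schwartz d θ hθ f
  obtain ⟨Sh, hSh⟩ := sft_schwartz d θ hθ h
  funext z
  have hl : Integrable (sprod d θ f g) := hFG ▸ FG.integrable
  have hr : Integrable (sprod d θ g h) := hGH ▸ GH.integrable
  rw [sprod_eq d θ (sprod d θ f g), sprod_eq d θ f (sprod d θ g h),
    form2 d θ hl h.integrable, form1 d θ f.integrable hr]
  simp only [sprod_eq d θ f g, sprod_eq d θ g h]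
  simp only [form1 d θ f.integrable g.integrable, form2 d θ g.integrable h.integrable,
    ← hSf, ← hSh]
  set c := (((Real.pi * θ) ^ (-(2 * d : ℤ)) : ℝ) : ℂ)
  congr 1
  have hi := int_aux d θ Sh.integrable Sf.integrable
    (k := fun p => c * g (z - p.1 + p.2) * ph θ (sg d p.2 (z - p.1)) * ph θ (sg d p.1 z))
    (((continuous_const.mul (g.continuous.comp (by fun_prop))).mul
      ((ph_cont θ).comp (sg_cont' d continuous_snd (by fun_prop)))).mul
      ((ph_cont θ).comp (sg_cont' d continuous_fst continuous_const)))
    (C := ‖c‖ * SchwartzMap.seminorm ℝ 0 0 g) (fun p => by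
      simp only [norm_mul, ph_norm, mul_one]
      gcongr
      exact SchwartzMap.norm_le_seminorm ℝ g _)
  have hswap := integral_integral_swap (f := fun v u => Sh v * Sf u *
    (c * g (z - v + u) * ph θ (sg d u (z - v)) * ph θ (sg d v z))) hi
  calc _ = _ := ?_
    _ = _ := hswap
    _ = _ := ?_
  · congr 1
    funext v
    rw [← integral_const_mul, ← integral_const_mul, ← integral_mul_const]
    congr 1
    funext u
    ring
  · congr 1
    funext u
    rw [← integral_const_mul, ← integral_const_mul, ← integral_mul_const]
    congr 1
    funext v
    have e1 : z - v + u = z + u - v := by abel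
    have e2 : sg d u (z - v) + sg d v z = sg d v (z + u) + sg d u z := by
      rw [map_sub, map_add, sg_anti d u v]
      ring
    have e3 := ph_add θ (sg d u (z - v)) (sg d v z)
    rw [e2, ph_add] at e3
    rw [e1]
    linear_combination (-(Sh v * Sf u * c * g (z + u - v))) * e3

theorem star_schwartz_and_assoc (d : ℕ) (θ : ℝ) (hθ : 0 < θ) :
    (∀ f g : SchwartzMap ((Fin d → ℝ) × (Fin d → ℝ)) ℂ,
      ∃ F : SchwartzMap ((Fin d → ℝ) × (Fin d → ℝ)) ℂ, ⇑F = sprod d θ f g) ∧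
    (∀ f g h : SchwartzMap ((Fin d → ℝ) × (Fin d → ℝ)) ℂ,
      sprod d θ (sprod d θ f g) h = sprod d θ f (sprod d θ g h)) := by
  exact ⟨sprod_schwartz d θ hθ, sprod_assoc d θ hθ⟩
end

section
/- For all Schwartz functions f, g : ℝ^d × ℝ^d → ℂ and every z ∈ ℝ^d × ℝ^d, the star product is a deformation in the direction of the Poisson bracket: lim_{θ → 0⁺} (1/θ) ((f ⋆_θ g)(z) − (g ⋆_θ f)(z)) = −i {f,g}(z), where {f,g}(x,w) = Σ_{i=1}^d (∂_{x_i} f · ∂_{w_i} g − ∂_{w_i} f · ∂_{x_i} g)(x,w). -/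
open MeasureTheory Complex Real Filter Topology

/-- The standard Poisson bracket
`{f,g} = Σᵢ (∂_{xᵢ} f · ∂_{wᵢ} g − ∂_{wᵢ} f · ∂_{xᵢ} g)` on `ℝ^d × ℝ^d`. -/
noncomputable def poisson (d : ℕ) (f g : (Fin d → ℝ) × (Fin d → ℝ) → ℂ)
    (z : (Fin d → ℝ) × (Fin d → ℝ)) : ℂ :=
  ∑ i : Fin d,
    (fderiv ℝ f z (Pi.single i 1, 0) * fderiv ℝ g z (0, Pi.single i 1) -
      fderiv ℝ f z (0, Pi.single i 1) * fderiv ℝ g z (Pi.single i 1, 0))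

open scoped FourierTransform LineDeriv

section general
variable {V : Type*} [NormedAddCommGroup V] [InnerProductSpace ℝ V] [FiniteDimensional ℝ V]
  [MeasurableSpace V] [BorelSpace V]

lemma aux_integral_fourier (G : SchwartzMap V ℂ) : ∫ ξ, (𝓕 G) ξ = G 0 := by
  have h : 𝓕⁻ (𝓕 G) = G := FourierTransform.fourierInv_fourier_eq G
  have h2 : (𝓕⁻ (𝓕 G)) 0 = G 0 := by rw [h]
  rw [SchwartzMap.fourierInv_coe, Real.fourierInv_eq] at h2
  simpa using h2

lemma aux_moment (G : SchwartzMap V ℂ) (m : V) :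
    ∫ ξ, ((inner ℝ ξ m : ℝ) : ℂ) * (𝓕 G) ξ = (2 * π * I)⁻¹ * fderiv ℝ G 0 m := by
  have h := aux_integral_fourier (∂_{m} G)
  rw [SchwartzMap.fourier_lineDerivOp_eq, SchwartzMap.lineDerivOp_apply_eq_fderiv] at h
  rw [← h]
  have : (fun x : V => inner ℝ x m).HasTemperateGrowth := by fun_prop
  simp [SchwartzMap.smulLeftCLM_apply_apply this, integral_const_mul]
  have : (π : ℂ) ≠ 0 := by exact_mod_cast Real.pi_ne_zero
  field_simp
  simp

lemma aux_deriv (F G : SchwartzMap V ℂ) (A : V →L[ℝ] V) :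
    HasDerivAt (fun θ : ℝ => ∫ ξ, F (θ • A ξ) * (𝓕 G) ξ)
      (∫ ξ, fderiv ℝ F 0 (A ξ) * (𝓕 G) ξ) 0 := by
  obtain ⟨C, hC⟩ : ∃ C, ∀ x, ‖fderiv ℝ F x‖ ≤ C := by
    obtain ⟨C, -, hC⟩ := (SchwartzMap.fderivCLM ℝ V ℂ F).decay 0 0
    exact ⟨C, fun x => by simpa using hC x⟩
  have hC0 : 0 ≤ C := (norm_nonneg _).trans (hC 0)
  have hc : Continuous (fderiv ℝ F) := (SchwartzMap.fderivCLM ℝ V ℂ F).continuous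
  have h := (hasDerivAt_integral_of_dominated_loc_of_deriv_le (μ := volume) (x₀ := (0:ℝ))
    (s := Set.univ)
    (F := fun θ ξ => F (θ • A ξ) * (𝓕 G) ξ)
    (F' := fun θ ξ => fderiv ℝ F (θ • A ξ) (A ξ) * (𝓕 G) ξ)
    (bound := fun ξ => C * ‖A‖ * (‖ξ‖ ^ 1 * ‖(𝓕 G) ξ‖)) univ_mem ?_ ?_ ?_ ?_ ?_ ?_).2
  · simpa using h
  · refine Eventually.of_forall fun θ => Continuous.aestronglyMeasurable ?_
    have := F.continuous
    have := (𝓕 G).continuous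
    fun_prop
  · simpa using (𝓕 G).integrable.const_mul (F 0)
  · apply Continuous.aestronglyMeasurable
    have := (𝓕 G).continuous
    have h2 : Continuous fun ξ => fderiv ℝ F ((0:ℝ) • A ξ) (A ξ) :=
      (hc.comp (by fun_prop : Continuous fun ξ => (0:ℝ) • A ξ)).clm_apply A.continuous
    exact h2.mul this
  · refine Eventually.of_forall fun ξ θ _ => ?_
    rw [norm_mul, pow_one, ← mul_assoc]
    gcongr
    calc _ ≤ ‖fderiv ℝ F (θ • A ξ)‖ * ‖A ξ‖ := ContinuousLinearMap.le_opNorm _ _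
      _ ≤ C * (‖A‖ * ‖ξ‖) := by
        gcongr
        · exact hC _
        · exact A.le_opNorm _
      _ = _ := by ring
  · exact ((𝓕 G).integrable_pow_mul volume 1).const_mul _
  · refine Eventually.of_forall fun ξ θ _ => ?_
    have h1 : HasDerivAt (fun θ : ℝ => θ • A ξ) (A ξ) θ := by
      simpa using (hasDerivAt_id θ).smul_const (A ξ)
    exact (((F.differentiableAt).hasFDerivAt (x := θ • A ξ)).comp_hasDerivAt θ h1).mul_const _
end general

section concrete
variable (d : ℕ)

abbrev EE := EuclideanSpace ℝ (Fin d ⊕ Fin d)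
abbrev VV := (Fin d → ℝ) × (Fin d → ℝ)

instance volHaar : (volume : Measure (VV d)).IsAddHaarMeasure := by
  rw [Measure.volume_eq_prod]
  exact Measure.prod.instIsAddHaarMeasure _ _

noncomputable def phi : EE d ≃L[ℝ] VV d :=
  (EuclideanSpace.equiv (Fin d ⊕ Fin d) ℝ).trans
    (ContinuousLinearEquiv.sumPiEquivProdPi ℝ (Fin d) (Fin d) (fun _ => ℝ))

@[simp] lemma phi_fst (v : EE d) (i : Fin d) : (phi d v).1 i = v (Sum.inl i) := rfl
@[simp] lemma phi_snd (v : EE d) (i : Fin d) : (phi d v).2 i = v (Sum.inr i) := rfl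

lemma phi_mp : MeasurePreserving (phi d) volume volume :=
  (volume_measurePreserving_sumPiEquivProdPi (fun _ : Fin d ⊕ Fin d => ℝ)).comp
    (PiLp.volume_preserving_ofLp (Fin d ⊕ Fin d))

/-- `(p, q) ↦ (q, -p)`. -/
noncomputable def JJ : EE d ≃ₗᵢ[ℝ] EE d where
  toFun v := WithLp.toLp 2 (Sum.elim (fun i => v (Sum.inr i)) (fun i => - v (Sum.inl i)))
  invFun v := WithLp.toLp 2 (Sum.elim (fun i => - v (Sum.inr i)) (fun i => v (Sum.inl i)))
  map_add' v w := by
    ext (i | i) <;> simp [add_comm]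
  map_smul' c v := by
    ext (i | i) <;> simp
  left_inv v := by
    ext (i | i) <;> simp
  right_inv v := by
    ext (i | i) <;> simp
  norm_map' v := by
    simp [EuclideanSpace.norm_eq, add_comm]

@[simp] lemma JJ_inl (v : EE d) (i : Fin d) : JJ d v (Sum.inl i) = v (Sum.inr i) := rfl
@[simp] lemma JJ_inr (v : EE d) (i : Fin d) : JJ d v (Sum.inr i) = - v (Sum.inl i) := rfl

noncomputable def tr (z : VV d) (f : SchwartzMap (VV d) ℂ) : SchwartzMap (EE d) ℂ :=
  SchwartzMap.compCLMOfContinuousLinearEquiv ℂ (phi d) (f.compSubConstCLM ℂ (-z))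

lemma tr_apply (z : VV d) (f : SchwartzMap (VV d) ℂ) (v : EE d) :
    tr d z f v = f (phi d v + z) := by
  simp [tr]

lemma tr_fderiv (z : VV d) (f : SchwartzMap (VV d) ℂ) (m : EE d) :
    fderiv ℝ (tr d z f) 0 m = fderiv ℝ f z (phi d m) := by
  have h1 : HasFDerivAt f (fderiv ℝ f z) (phi d 0 + z) := by
    simpa using (f.differentiableAt (x := z)).hasFDerivAt
  have h2 : HasFDerivAt (fun v => phi d v + z) (phi d : EE d →L[ℝ] VV d) 0 :=
    (phi d).hasFDerivAt.add_const z
  have h3 := (h1.comp (0 : EE d) h2).fderiv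
  have : (tr d z f : EE d → ℂ) = f ∘ fun v => phi d v + z := funext fun v => tr_apply d z f v
  rw [this, h3]
  rfl

lemma integral_shift (z : VV d) (h : VV d → ℂ) : ∫ p, h p = ∫ v : EE d, h (phi d v + z) := by
  rw [(phi_mp d).integral_comp (phi d).toHomeomorph.measurableEmbedding (fun p => h (p + z)),
    integral_add_right_eq_self]

lemma sprod_eq_s16 (f g : SchwartzMap (VV d) ℂ) (z : VV d) {θ : ℝ} (hθ : 0 < θ) :
    sprod d θ f g z = ∫ ξ : EE d, tr d z f (θ • (π • JJ d ξ)) * (𝓕 (tr d z g)) ξ := by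
  have key : ∀ u : EE d, ∫ q : VV d, f (phi d u + z) * g q * Complex.exp (2 * Complex.I / (θ : ℂ) *
        ((∑ i, (q.1 i - z.1 i) * (phi d u + z).2 i + ∑ i, (z.1 i - (phi d u + z).1 i) * q.2 i +
          ∑ i, ((phi d u + z).1 i - q.1 i) * z.2 i : ℝ) : ℂ))
      = tr d z f u * (𝓕 (tr d z g)) ((π * θ)⁻¹ • (JJ d).symm u) := by
    intro u
    rw [integral_shift d z, SchwartzMap.fourier_coe, Real.fourier_eq', ← integral_const_mul]
    congr 1
    ext v
    rw [tr_apply, tr_apply, smul_eq_mul, mul_assoc, mul_comm (g _)]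
    congr 3
    have h1 : ∀ i, (JJ d).symm u (Sum.inl i) = - u (Sum.inr i) := fun i => rfl
    have h2 : ∀ i, (JJ d).symm u (Sum.inr i) = u (Sum.inl i) := fun i => rfl
    have : (∑ i, ((phi d v + z).1 i - z.1 i) * (phi d u + z).2 i
        + ∑ i, (z.1 i - (phi d u + z).1 i) * (phi d v + z).2 i +
          ∑ i, ((phi d u + z).1 i - (phi d v + z).1 i) * z.2 i : ℝ)
        = - inner ℝ v ((JJ d).symm u) := by
      simp only [PiLp.inner_apply, Fintype.sum_sum_type, h1, h2, ← Finset.sum_add_distrib,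
        ← Finset.sum_neg_distrib]
      refine Finset.sum_congr rfl fun i _ => ?_
      simp
      ring
    rw [this, inner_smul_right]
    push_cast
    have : (π : ℂ) ≠ 0 := by exact_mod_cast Real.pi_ne_zero
    have : (θ : ℂ) ≠ 0 := by exact_mod_cast hθ.ne'
    field_simp
  have hint : Integrable (fun p : VV d × VV d => f p.1 * g p.2 * Complex.exp (2 * Complex.I / (θ : ℂ) *
        ((∑ i, (p.2.1 i - z.1 i) * p.1.2 i + ∑ i, (z.1 i - p.1.1 i) * p.2.2 i +
          ∑ i, (p.1.1 i - p.2.1 i) * z.2 i : ℝ) : ℂ))) := by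
    have h0 : Integrable (fun p : VV d × VV d => f p.1 * g p.2) :=
      f.integrable.mul_prod g.integrable
    refine h0.mul_bdd (c := 1) (Continuous.aestronglyMeasurable (by fun_prop)) ?_
    refine Eventually.of_forall fun p => le_of_eq ?_
    rw [show ∀ r : ℝ, 2 * Complex.I / (θ : ℂ) * (r : ℂ) = ((2 / θ * r : ℝ) : ℂ) * I from
      fun r => by push_cast; ring]
    exact Complex.norm_exp_ofReal_mul_I _
  rw [sprod, Measure.volume_eq_prod, integral_prod _ hint, integral_shift d z]
  simp only [key]
  have hp : 0 < π * θ := by positivity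
  rw [← (JJ d).measurePreserving.integral_comp (JJ d).toHomeomorph.measurableEmbedding]
  simp only [LinearIsometryEquiv.symm_apply_apply]
  have h4 := Measure.integral_comp_inv_smul_of_nonneg (volume : Measure (EE d))
    (fun ξ => tr d z f (θ • (π • JJ d ξ)) * (𝓕 (tr d z g)) ξ) hp.le
  have h5 : ∀ ξ, θ • (π • JJ d ((π * θ)⁻¹ • ξ)) = JJ d ξ := by
    intro ξ
    rw [map_smul, smul_smul, smul_smul, show θ * π * (π * θ)⁻¹ = 1 by field_simp, one_smul]
  simp only [h5] at h4
  rw [h4]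
  have h6 : Module.finrank ℝ (EE d) = 2 * d := by simp [two_mul]
  rw [h6, Complex.real_smul, ← mul_assoc, ← Complex.ofReal_mul]
  have : (π * θ) ^ (-(2 * d : ℤ)) * (π * θ) ^ (2 * d) = 1 := by
    rw [← zpow_natCast, ← zpow_add₀ hp.ne']
    simp
  rw [this]; simp

lemma deriv_val (f g : SchwartzMap (VV d) ℂ) (z : VV d) :
    ∫ ξ : EE d, fderiv ℝ (tr d z f) 0 (π • JJ d ξ) * (𝓕 (tr d z g)) ξ
      = - I / 2 * poisson d f g z := by
  have hexp : ∀ ξ : EE d, JJ d ξ = ∑ j : Fin d ⊕ Fin d,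
      (inner ℝ ξ (EuclideanSpace.single j (1:ℝ))) • JJ d (EuclideanSpace.single j 1) := by
    intro ξ
    simp only [← map_smul, ← map_sum]
    congr 1
    ext k
    rcases k with k | k <;> simp [PiLp.inner_apply, Pi.single_apply]
  have h1 : ∀ ξ : EE d, fderiv ℝ (tr d z f) 0 (π • JJ d ξ) * (𝓕 (tr d z g)) ξ
      = ∑ j : Fin d ⊕ Fin d, (π * fderiv ℝ f z (phi d (JJ d (EuclideanSpace.single j 1)))) *
        (((inner ℝ ξ (EuclideanSpace.single j (1:ℝ)) : ℝ) : ℂ) * (𝓕 (tr d z g)) ξ) := by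
    intro ξ
    rw [tr_fderiv, hexp]
    simp only [map_smul, map_sum, Finset.smul_sum, Finset.sum_mul, Complex.real_smul]
    exact Finset.sum_congr rfl fun j _ => by ring
  simp only [h1]
  rw [integral_finsetSum]
  · simp only [integral_const_mul, aux_moment, tr_fderiv, Fintype.sum_sum_type]
    have e1 : ∀ i, phi d (EuclideanSpace.single (Sum.inl i) 1) = (Pi.single i 1, 0) := by
      intro i
      ext k <;> simp [Pi.single_apply]
    have e2 : ∀ i, phi d (EuclideanSpace.single (Sum.inr i) 1) = (0, Pi.single i 1) := by
      intro i
      ext k <;> simp [Pi.single_apply]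
    have e3 : ∀ i, phi d (JJ d (EuclideanSpace.single (Sum.inl i) 1)) = -(0, Pi.single i 1) := by
      intro i
      ext k <;> simp [Pi.single_apply]
    have e4 : ∀ i, phi d (JJ d (EuclideanSpace.single (Sum.inr i) 1)) = (Pi.single i 1, 0) := by
      intro i
      ext k <;> simp [Pi.single_apply]
    simp only [e1, e2, e3, e4, poisson, ← Finset.sum_add_distrib, Finset.mul_sum, map_neg]
    refine Finset.sum_congr rfl fun i _ => ?_
    have : (π : ℂ) ≠ 0 := by exact_mod_cast Real.pi_ne_zero
    have hI : (I : ℂ)⁻¹ = -I := Complex.inv_I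
    rw [mul_inv, mul_inv, hI]
    field_simp
    ring
  · intro j _
    apply Integrable.const_mul
    refine ((𝓕 (tr d z g)).integrable_pow_mul volume 1).mono' ?_ ?_
    · apply Continuous.aestronglyMeasurable
      have := (𝓕 (tr d z g)).continuous
      fun_prop
    · refine Eventually.of_forall fun ξ => ?_
      rw [norm_mul, pow_one]
      gcongr
      simpa using norm_inner_le_norm (𝕜 := ℝ) ξ (EuclideanSpace.single j (1:ℝ))

lemma half_limit (f g : SchwartzMap (VV d) ℂ) (z : VV d) :
    Tendsto (fun θ : ℝ => (1 / (θ : ℂ)) * (sprod d θ f g z - f z * g z))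
      (nhdsWithin 0 (Set.Ioi 0)) (nhds (- I / 2 * poisson d f g z)) := by
  have h := aux_deriv (tr d z f) (tr d z g)
    ((π • (JJ d).toContinuousLinearEquiv.toContinuousLinearMap : EE d →L[ℝ] EE d))
  have h' : HasDerivAt (fun θ : ℝ => ∫ ξ, tr d z f (θ • (π • JJ d ξ)) * (𝓕 (tr d z g)) ξ)
      (- I / 2 * poisson d f g z) 0 := by
    rw [← deriv_val]; exact h
  have h2 := h'.tendsto_slope_zero_right
  refine h2.congr' ?_
  filter_upwards [self_mem_nhdsWithin] with θ hθ
  rw [sprod_eq_s16 d f g z hθ, Complex.real_smul]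
  simp only [zero_add, zero_smul, integral_const_mul, aux_integral_fourier, tr_apply, map_zero]
  simp
end concrete

theorem star_deforms_poisson (d : ℕ)
    (f g : SchwartzMap ((Fin d → ℝ) × (Fin d → ℝ)) ℂ)
    (z : (Fin d → ℝ) × (Fin d → ℝ)) :
    Tendsto (fun θ : ℝ => (1 / (θ : ℂ)) * (sprod d θ f g z - sprod d θ g f z))
      (nhdsWithin 0 (Set.Ioi 0))
      (nhds (-Complex.I * poisson d f g z)) := by
  have h := (half_limit d f g z).sub (half_limit d g f z)
  have e : poisson d g f z = - poisson d f g z := by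
    simp only [poisson, ← Finset.sum_neg_distrib]
    exact Finset.sum_congr rfl fun i _ => by ring
  rw [e] at h
  convert h using 2
  · ring
  · ring
end
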